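/- arXiv:math/0305087 — 2 statements merged into one kernel-verified Lean document; each statement's English description precedes it below -/
import Mathlib

section
/- Let h ≥ 2 be an integer and let f : ℤ → ℕ ∪ {∞} be any function such that f⁻¹(0) is finite. Then there exist uncountably many sets A of integers such that r_{A,h}(n) = f(n) for all integers n, and such that there are constants c_0 > 0 and x_0 with: the number of elements a ∈ A with |a| ≤ x is at least c_0 · x^{1/(2h-1)} for all x ≥ x_0. -/
open scoped BigOperators

/-- The representation function of order `h`: the number (in `ℕ∞`) of ways to
write `n = a₁ + a₂ + ⋯ + a_h` with all `aᵢ ∈ A` and `a₁ ≤ a₂ ≤ ⋯ ≤ a_h`. -/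
noncomputable def repH (h : ℕ) (A : Set ℤ) (n : ℤ) : ℕ∞ :=
  {a : Fin h → ℤ | (∀ i, a i ∈ A) ∧ Monotone a ∧ ∑ i, a i = n}.encard

/-- Representations as multisets. -/
def RR (h : ℕ) (A : Set ℤ) (n : ℤ) : Set (Multiset ℤ) :=
  {s | (∀ a ∈ s, a ∈ A) ∧ s.card = h ∧ s.sum = n}

lemma repH_eq (h : ℕ) (A : Set ℤ) (n : ℤ) : repH h A n = (RR h A n).encard := by
  unfold repH
  have hinj : Set.InjOn (fun a : Fin h → ℤ => (List.ofFn a : Multiset ℤ))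
      {a : Fin h → ℤ | (∀ i, a i ∈ A) ∧ Monotone a ∧ ∑ i, a i = n} := by
    rintro a ⟨_, ha, _⟩ b ⟨_, hb, _⟩ hab
    have hp : (List.ofFn a).Perm (List.ofFn b) := Multiset.coe_eq_coe.1 hab
    exact List.ofFn_injective (hp.eq_of_sortedLE ha.sortedLE_ofFn hb.sortedLE_ofFn)
  rw [← hinj.encard_image]
  congr 1
  ext s
  constructor
  · rintro ⟨a, ⟨h1, h2, h3⟩, rfl⟩
    refine ⟨?_, by simp, by simpa [List.sum_ofFn] using h3⟩
    intro x hx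
    simp only [Multiset.mem_coe, List.mem_ofFn] at hx
    obtain ⟨i, rfl⟩ := hx
    exact h1 i
  · rintro ⟨h1, h2, h3⟩
    have hl : (s.sort (· ≤ ·)).length = h := by simp [h2]
    subst hl
    have hof : List.ofFn (fun i => (s.sort (· ≤ ·)).get i) = s.sort (· ≤ ·) := List.ofFn_get _
    refine ⟨fun i => (s.sort (· ≤ ·)).get i, ⟨?_, ?_, ?_⟩, ?_⟩
    · intro i
      apply h1
      rw [← Multiset.mem_sort (· ≤ ·)]
      exact List.get_mem _ _
    · rw [← List.sortedLE_ofFn_iff, hof]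
      exact (Multiset.pairwise_sort s (· ≤ ·)).sortedLE
    · rw [← List.sum_ofFn, hof, ← Multiset.sum_coe, Multiset.sort_eq, h3]
    · simp only [hof, Multiset.sort_eq]

lemma arith (m p q p' q' : ℕ) (h1 : p + q ≤ m + 1) (h2 : p' + q' ≤ m + 1)
    (hk : (m : ℤ) * p - q = m * p' - q') :
    (p = p' ∧ q = q') ∨ (p = 0 ∧ q = 0 ∧ p' = 1 ∧ q' = m) ∨ (p = 1 ∧ q = m ∧ p' = 0 ∧ q' = 0) := by
  rcases lt_trichotomy p p' with hlt | heq | hlt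
  · obtain ⟨e, rfl⟩ := Nat.exists_eq_add_of_lt hlt
    have h3 : (m * e : ℕ) + q + m = q' := by
      zify; push_cast at hk; linarith
    have : e = 0 := by generalize m * e = w at *; omega
    subst this
    right; left
    omega
  · subst heq
    left; constructor; rfl
    omega
  · obtain ⟨e, rfl⟩ := Nat.exists_eq_add_of_lt hlt
    have h3 : (m * e : ℕ) + q' + m = q := by
      zify; push_cast at hk; linarith
    have : e = 0 := by generalize m * e = w at *; omega
    subst this
    right; right
    omega

lemma decomp (A : Set ℤ) (b₁ b₂ : ℤ) (s : Multiset ℤ)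
    (hs : ∀ a ∈ s, a ∈ A ∪ {b₁, b₂}) :
    ∃ (p q : ℕ) (t : Multiset ℤ), (∀ a ∈ t, a ∈ A) ∧
      s = Multiset.replicate p b₁ + Multiset.replicate q b₂ + t := by
  induction s using Multiset.induction_on with
  | empty => exact ⟨0, 0, 0, by simp, by simp⟩
  | cons a s ih =>
    obtain ⟨p, q, t, ht, rfl⟩ := ih (fun x hx => hs x (Multiset.mem_cons_of_mem hx))
    have ha := hs a (Multiset.mem_cons_self _ _)
    simp only [Set.union_insert, Set.union_singleton, Set.mem_insert_iff] at ha
    rcases ha with rfl | rfl | ha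
    · exact ⟨p + 1, q, t, ht, by simp [Multiset.replicate_succ]⟩
    · exact ⟨p, q + 1, t, ht, by simp [Multiset.replicate_succ]⟩
    · refine ⟨p, q, a ::ₘ t, ?_, by simp⟩
      intro x hx
      rcases Multiset.mem_cons.1 hx with rfl | hx
      exacts [ha, ht x hx]

/-- Sums of fewer than `h` elements are unique. -/
def Uniq (h : ℕ) (A : Set ℤ) : Prop :=
  ∀ s t : Multiset ℤ, (∀ a ∈ s, a ∈ A) → (∀ a ∈ t, a ∈ A) → s.card = t.card → s.card < h →
    s.sum = t.sum → s = t

lemma RR_mono {h : ℕ} {A B : Set ℤ} (hAB : A ⊆ B) (n : ℤ) : RR h A n ⊆ RR h B n :=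
  fun _ ⟨h1, h2, h3⟩ => ⟨fun a ha => hAB (h1 a ha), h2, h3⟩

lemma step_core (m : ℕ) (hm : 1 ≤ m) (f : ℤ → ℕ∞) (A : Set ℤ) (u c b₁ b₂ : ℤ)
    (hb₁ : b₁ = m * c + u) (hb₂ : b₂ = - c)
    (hU : Uniq (m + 1) A) (hR : ∀ n, (RR (m + 1) A n).encard ≤ f n)
    (hu : (RR (m + 1) A u).encard < f u)
    (hG : ∀ (p q : ℕ) (s : Multiset ℤ) (p' q' : ℕ) (t : Multiset ℤ),
      (∀ a ∈ s, a ∈ A) → (∀ a ∈ t, a ∈ A) → p + q + s.card = m + 1 → p' + q' + t.card = m + 1 →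
      (m : ℤ) * p - q ≠ m * p' - q' → p * b₁ + q * b₂ + s.sum ≠ p' * b₁ + q' * b₂ + t.sum)
    (hZ : ∀ (p q : ℕ) (s : Multiset ℤ), (∀ a ∈ s, a ∈ A) → p + q + s.card = m + 1 →
      (m : ℤ) * p - q ≠ 0 → f (p * b₁ + q * b₂ + s.sum) ≠ 0)
    (h1A : b₁ ∉ A) :
    Uniq (m + 1) (A ∪ {b₁, b₂}) ∧ (∀ n, (RR (m + 1) (A ∪ {b₁, b₂}) n).encard ≤ f n) ∧
    (RR (m + 1) A u).encard + 1 ≤ (RR (m + 1) (A ∪ {b₁, b₂}) u).encard := by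
  set sx : Multiset ℤ := Multiset.replicate 1 b₁ + Multiset.replicate m b₂ with hsx
  have hsxsum : sx.sum = u := by simp [hsx, hb₁, hb₂]
  have hsxA : sx ∉ RR (m + 1) A u := by
    rintro ⟨h, -⟩
    exact h1A (h b₁ (by simp [hsx]))
  refine ⟨?_, ?_, ?_⟩
  · intro s t hs ht hc hlt hsum
    obtain ⟨p, q, s, hs', rfl⟩ := decomp A b₁ b₂ s hs
    obtain ⟨p', q', t, ht', rfl⟩ := decomp A b₁ b₂ t ht
    simp only [Multiset.card_add, Multiset.card_replicate, Multiset.sum_add,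
      Multiset.sum_replicate, nsmul_eq_mul] at hc hlt hsum
    have hk : (m : ℤ) * p - q = m * p' - q' := by
      by_contra hne
      obtain ⟨e, he⟩ := Nat.exists_eq_add_of_lt hlt
      refine hG p (q + (e + 1)) s p' (q' + (e + 1)) t hs' ht' (by omega) (by omega) ?_ ?_
      · push_cast; intro h; apply hne; linarith
      · push_cast; linarith
    rcases arith m p q p' q' (by omega) (by omega) hk with ⟨rfl, rfl⟩ | h | h
    · rw [hU s t hs' ht' (by omega) (by omega) (by linarith)]
    · omega
    · omega
  · intro n
    by_cases hex : ∃ (p q : ℕ) (s : Multiset ℤ), (∀ a ∈ s, a ∈ A) ∧ p + q + s.card = m + 1 ∧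
      (m : ℤ) * p - q ≠ 0 ∧ p * b₁ + q * b₂ + s.sum = n
    · obtain ⟨p, q, s, hs, hc, hk, hn⟩ := hex
      have hfn : f n ≠ 0 := hn ▸ hZ p q s hs hc hk
      refine le_trans ?_ (Order.one_le_iff_ne_zero.2 hfn)
      have : RR (m + 1) (A ∪ {b₁, b₂}) n ⊆
          {Multiset.replicate p b₁ + Multiset.replicate q b₂ + s} := by
        rintro t ⟨ht, htc, hts⟩
        obtain ⟨p', q', t, ht', rfl⟩ := decomp A b₁ b₂ t ht
        simp only [Multiset.card_add, Multiset.card_replicate, Multiset.sum_add,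
          Multiset.sum_replicate, nsmul_eq_mul] at htc hts
        have hk' : (m : ℤ) * p - q = m * p' - q' := by
          by_contra hne
          exact hG p q s p' q' t hs ht' hc htc hne (by rw [hn, hts])
        rcases arith m p q p' q' (by omega) (by omega) hk' with ⟨rfl, rfl⟩ | ⟨rfl, rfl, -⟩ | ⟨rfl, rfl, -⟩
        · have hpq : 0 < p + q := by
            rcases Nat.eq_zero_or_pos (p + q) with h0 | h0
            · exfalso; apply hk
              obtain ⟨rfl, rfl⟩ : p = 0 ∧ q = 0 := by omega
              simp
            · exact h0
          rw [hU s t hs ht' (by omega) (by omega) (by linarith)]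
          rfl
        · simp at hk
        · simp at hk
      exact (Set.encard_le_encard this).trans (by simp)
    · push Not at hex
      have hsub : RR (m + 1) (A ∪ {b₁, b₂}) n ⊆ RR (m + 1) A n ∪ (if n = u then {sx} else ∅) := by
        rintro t ⟨ht, htc, hts⟩
        obtain ⟨p', q', t, ht', rfl⟩ := decomp A b₁ b₂ t ht
        simp only [Multiset.card_add, Multiset.card_replicate, Multiset.sum_add,
          Multiset.sum_replicate, nsmul_eq_mul] at htc hts
        have hk' : (m : ℤ) * p' - q' = 0 := by
          by_contra hne
          exact hex p' q' t ht' htc hne hts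
        rcases arith m p' q' 0 0 (by omega) (by omega) (by simpa using hk') with
          ⟨rfl, rfl⟩ | ⟨-, -, h, -⟩ | ⟨rfl, rfl, -⟩
        · left
          exact ⟨by simpa using ht', by simpa using htc, by simpa using hts⟩
        · omega
        · right
          have : t = 0 := Multiset.card_eq_zero.1 (by omega)
          subst this
          have hnu : n = u := by
            rw [← hts, hb₁, hb₂]; simp
          simp [hnu, hsx]
      split_ifs at hsub with hnu
      · subst hnu
        refine (Set.encard_le_encard hsub).trans ((Set.encard_union_le _ _).trans ?_)
        rw [Set.encard_singleton]
        exact Order.add_one_le_of_lt hu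
      · rw [Set.union_empty] at hsub
        exact (Set.encard_le_encard hsub).trans (hR n)
  · rw [← Set.encard_insert_of_notMem hsxA]
    apply Set.encard_le_encard
    rw [Set.insert_subset_iff]
    refine ⟨⟨?_, by simp [hsx, add_comm], hsxsum⟩, RR_mono Set.subset_union_left u⟩
    intro a ha
    simp only [hsx, Multiset.mem_add, Multiset.mem_replicate] at ha
    rcases ha with ⟨-, rfl⟩ | ⟨-, rfl⟩ <;> simp

open scoped Pointwise in
lemma exists_c (V W : Finset (ℤ × ℤ)) : ∃ c : ℕ, 1 ≤ c ∧ c ≤ V.card * W.card + 1 ∧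
    ∀ v ∈ V, ∀ w ∈ W, v.1 ≠ w.1 → v.1 * (c : ℤ) + v.2 ≠ w.1 * c + w.2 := by
  let bad : Finset ℕ := (V ×ˢ W).image (fun x => ((x.2.2 - x.1.2) / (x.1.1 - x.2.1)).toNat)
  have hlt : bad.card < (Finset.Icc 1 (V.card * W.card + 1)).card := by
    rw [Nat.card_Icc]
    have := Finset.card_image_le (s := V ×ˢ W)
      (f := fun x => ((x.2.2 - x.1.2) / (x.1.1 - x.2.1)).toNat)
    rw [Finset.card_product] at this
    simp only [bad]
    omega
  obtain ⟨c, hc, hcb⟩ := Finset.exists_mem_notMem_of_card_lt_card hlt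
  rw [Finset.mem_Icc] at hc
  refine ⟨c, hc.1, hc.2, ?_⟩
  intro v hv w hw hne heq
  apply hcb
  simp only [bad, Finset.mem_image, Finset.mem_product]
  refine ⟨(v, w), ⟨hv, hw⟩, ?_⟩
  have h1 : w.2 - v.2 = (v.1 - w.1) * c := by linarith
  simp only [h1]
  rw [Int.mul_ediv_cancel_left _ (sub_ne_zero.2 hne)]
  simp

open scoped Pointwise in
lemma formal_mem (A : Finset ℤ) (L : Finset (ℤ × ℤ)) (hL : ∀ a ∈ A, ((0 : ℤ), a) ∈ L)
    (s : Multiset ℤ) (hs : ∀ a ∈ s, a ∈ A) : ((0 : ℤ), s.sum) ∈ s.card • L := by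
  induction s using Multiset.induction_on with
  | empty => simp
  | cons a s ih =>
    have h1 := ih (fun x hx => hs x (Multiset.mem_cons_of_mem hx))
    have h2 := hL a (hs a (Multiset.mem_cons_self _ _))
    rw [Multiset.card_cons, succ_nsmul]
    have := Finset.add_mem_add h1 h2
    simpa [add_comm] using this

open scoped Pointwise in
lemma formal_mem2 (A : Finset ℤ) (L : Finset (ℤ × ℤ)) (hL : ∀ a ∈ A, ((0 : ℤ), a) ∈ L)
    (l₁ l₂ : ℤ × ℤ) (h₁ : l₁ ∈ L) (h₂ : l₂ ∈ L) (p q : ℕ)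
    (s : Multiset ℤ) (hs : ∀ a ∈ s, a ∈ A) :
    p • l₁ + q • l₂ + ((0 : ℤ), s.sum) ∈ (p + q + s.card) • L := by
  rw [add_nsmul, add_nsmul]
  exact Finset.add_mem_add (Finset.add_mem_add (Finset.nsmul_mem_nsmul h₁)
    (Finset.nsmul_mem_nsmul h₂)) (formal_mem A L hL s hs)

open scoped Pointwise in
lemma exists_good (m : ℕ) (hm : 1 ≤ m) (A Z F : Finset ℤ) (u : ℤ) :
    ∃ c : ℕ, 1 ≤ c ∧
    c ≤ (2 * (A.card + 2) ^ m + 2) *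
      ((A.card + 2) ^ (m + 1) + (Z.card + F.card + A.card) + 2) + 1 ∧
    ∀ b₁ b₂ : ℤ, b₁ = m * c + u → b₂ = - c →
    (∀ (p q : ℕ) (s : Multiset ℤ) (p' q' : ℕ) (t : Multiset ℤ),
      (∀ a ∈ s, a ∈ A) → (∀ a ∈ t, a ∈ A) → p + q + s.card = m + 1 → p' + q' + t.card = m + 1 →
      (m : ℤ) * p - q ≠ m * p' - q' → p * b₁ + q * b₂ + s.sum ≠ p' * b₁ + q' * b₂ + t.sum) ∧
    (∀ (p q : ℕ) (s : Multiset ℤ), (∀ a ∈ s, a ∈ A) → p + q + s.card = m + 1 →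
      (m : ℤ) * p - q ≠ 0 → p * b₁ + q * b₂ + s.sum ∉ Z) ∧
    b₁ ∉ A ∧ b₂ ∉ A ∧ b₁ ≠ b₂ ∧ b₁ ∉ F ∧ b₂ ∉ F := by
  classical
  set l₁ : ℤ × ℤ := ((m : ℤ), u) with hl₁
  set l₂ : ℤ × ℤ := ((-1 : ℤ), 0) with hl₂
  set K : Finset (ℤ × ℤ) := {l₁, l₂} with hK
  set L : Finset (ℤ × ℤ) := A.image (fun a => ((0 : ℤ), a)) ∪ K with hL
  set V : Finset (ℤ × ℤ) := (K + m • L) ∪ K with hV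
  set W : Finset (ℤ × ℤ) := ((m + 1) • L ∪ (Z ∪ F ∪ A).image (fun a => ((0 : ℤ), a))) ∪ K with hW
  have hKc : K.card ≤ 2 := Finset.card_le_two
  have hLc : L.card ≤ A.card + 2 :=
    (Finset.card_union_le _ _).trans (add_le_add Finset.card_image_le hKc)
  have hVc : V.card ≤ 2 * (A.card + 2) ^ m + 2 := by
    refine (Finset.card_union_le _ _).trans (add_le_add (Finset.card_add_le.trans ?_) hKc)
    exact Nat.mul_le_mul hKc (Finset.card_nsmul_le.trans (Nat.pow_le_pow_left hLc _))
  have hWc : W.card ≤ (A.card + 2) ^ (m + 1) + (Z.card + F.card + A.card) + 2 := by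
    refine (Finset.card_union_le _ _).trans (add_le_add ?_ hKc)
    refine (Finset.card_union_le _ _).trans (add_le_add ?_ ?_)
    · exact Finset.card_nsmul_le.trans (Nat.pow_le_pow_left hLc _)
    · refine Finset.card_image_le.trans ?_
      refine (Finset.card_union_le _ _).trans (add_le_add (Finset.card_union_le _ _) le_rfl)
  have hAL : ∀ a ∈ A, ((0 : ℤ), a) ∈ L := fun a ha =>
    Finset.mem_union_left _ (Finset.mem_image_of_mem _ ha)
  have h1K : l₁ ∈ K := by simp [hK]
  have h2K : l₂ ∈ K := by simp [hK]
  have h1L : l₁ ∈ L := Finset.mem_union_right _ h1K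
  have h2L : l₂ ∈ L := Finset.mem_union_right _ h2K
  have hWm : ∀ (p q : ℕ) (s : Multiset ℤ), (∀ a ∈ s, a ∈ A) → p + q + s.card = m + 1 →
      p • l₁ + q • l₂ + ((0 : ℤ), s.sum) ∈ W := by
    intro p q s hs hc
    apply Finset.mem_union_left
    apply Finset.mem_union_left
    rw [← hc]
    exact formal_mem2 A L hAL l₁ l₂ h1L h2L p q s hs
  have hWz : ∀ z, z ∈ Z ∪ F ∪ A → ((0 : ℤ), z) ∈ W := fun z hz =>
    Finset.mem_union_left _ (Finset.mem_union_right _ (Finset.mem_image_of_mem _ hz))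
  have hVm : ∀ (p q : ℕ) (s : Multiset ℤ), (∀ a ∈ s, a ∈ A) → p + q + s.card = m + 1 →
      0 < p + q → p • l₁ + q • l₂ + ((0 : ℤ), s.sum) ∈ V := by
    intro p q s hs hc hpq
    apply Finset.mem_union_left
    rcases p with _ | p
    · rcases q with _ | q
      · omega
      · have h := Finset.add_mem_add h2K (formal_mem2 A L hAL l₁ l₂ h1L h2L 0 q s hs)
        have e : 0 + q + s.card = m := by omega
        rw [e] at h
        convert h using 1
        rw [succ_nsmul]; abel
    · have h := Finset.add_mem_add h1K (formal_mem2 A L hAL l₁ l₂ h1L h2L p q s hs)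
      have e : p + q + s.card = m := by omega
      rw [e] at h
      convert h using 1
      rw [succ_nsmul]; abel
  obtain ⟨c, hc1, hc2, hc⟩ := exists_c V W
  refine ⟨c, hc1, hc2.trans (Nat.add_le_add_right (Nat.mul_le_mul hVc hWc) 1), ?_⟩
  rintro b₁ b₂ rfl rfl
  have hval : ∀ (p q : ℕ) (s : Multiset ℤ),
      (p : ℤ) * (m * c + u) + q * (-(c : ℤ)) + s.sum =
      (p • l₁ + q • l₂ + ((0 : ℤ), s.sum)).1 * c + (p • l₁ + q • l₂ + ((0 : ℤ), s.sum)).2 := by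
    intro p q s
    simp [hl₁, hl₂]
    ring
  have hco : ∀ (p q : ℕ) (s : Multiset ℤ),
      (p • l₁ + q • l₂ + ((0 : ℤ), s.sum)).1 = (m : ℤ) * p - q := by
    intro p q s
    simp [hl₁, hl₂]
    ring
  have h1V : l₁ ∈ V := Finset.mem_union_right _ h1K
  have h2V : l₂ ∈ V := Finset.mem_union_right _ h2K
  have hmz : (m : ℤ) ≠ 0 := by omega
  have hb1 : ∀ z ∈ Z ∪ F ∪ A, (m : ℤ) * c + u ≠ z := by
    intro z hz
    simpa [hl₁] using hc l₁ h1V _ (hWz z hz) (by simpa [hl₁] using by omega)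
  have hb2 : ∀ z ∈ Z ∪ F ∪ A, -(c : ℤ) ≠ z := by
    intro z hz
    simpa [hl₂] using hc l₂ h2V _ (hWz z hz) (by simp [hl₂])
  refine ⟨?_, ?_, fun h => hb1 _ (by simp [h]) rfl, fun h => hb2 _ (by simp [h]) rfl, ?_,
    fun h => hb1 _ (by simp [h]) rfl, fun h => hb2 _ (by simp [h]) rfl⟩
  · intro p q s p' q' t hs ht h1 h2 hne
    by_cases hpq : 0 < p + q
    · rw [hval, hval]
      apply hc _ (hVm p q s hs h1 hpq) _ (hWm p' q' t ht h2)
      rwa [hco, hco]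
    · have hpq' : 0 < p' + q' := by
        by_contra h0
        apply hne
        obtain ⟨rfl, rfl, rfl, rfl⟩ : p = 0 ∧ q = 0 ∧ p' = 0 ∧ q' = 0 := by omega
        rfl
      rw [hval, hval]
      apply (hc _ (hVm p' q' t ht h2 hpq') _ (hWm p q s hs h1) ?_).symm
      rw [hco, hco]
      exact hne.symm
  · intro p q s hs h1 hne hz
    have hpq : 0 < p + q := by
      by_contra h0
      apply hne
      obtain ⟨rfl, rfl⟩ : p = 0 ∧ q = 0 := by omega
      simp
    refine hc _ (hVm p q s hs h1 hpq) _ (hWz _ (Finset.mem_union_left _ (Finset.mem_union_left _ hz)))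
      (by rw [hco]; exact hne) ?_
    rw [← hval]
    simp
  · have := hc l₁ h1V l₂ (Finset.mem_union_right _ h2K) (by simp only [hl₁, hl₂]; omega)
    simpa [hl₁, hl₂] using this

open scoped Pointwise in
lemma exists_u (h : ℕ) (f : ℤ → ℕ∞) (A Z : Finset ℤ) (hZ : ∀ n, f n = 0 → n ∈ Z) :
    ∃ u : ℤ, |u| ≤ (A.card ^ h + Z.card : ℕ) ∧ (RR h A u).encard < f u := by
  classical
  set N := A.card ^ h + Z.card with hN
  have hlt : (h • A ∪ Z).card < ((Finset.range (N + 1)).image (fun i : ℕ => (i : ℤ))).card := by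
    rw [Finset.card_image_of_injective _ Nat.cast_injective, Finset.card_range]
    have := (Finset.card_union_le (h • A) Z).trans (add_le_add_left Finset.card_nsmul_le _)
    omega
  obtain ⟨u, hu, hun⟩ := Finset.exists_mem_notMem_of_card_lt_card hlt
  simp only [Finset.mem_image, Finset.mem_range] at hu
  obtain ⟨i, hi, rfl⟩ := hu
  refine ⟨i, ?_, ?_⟩
  · rw [abs_of_nonneg (by positivity)]
    exact_mod_cast (by omega : i ≤ N)
  · have he : RR h (A : Set ℤ) (i : ℤ) = ∅ := by
      rw [Set.eq_empty_iff_forall_notMem]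
      rintro s ⟨h1, h2, h3⟩
      apply hun
      apply Finset.mem_union_left
      rw [← h2, ← h3]
      clear h2 h3
      induction s using Multiset.induction_on with
      | empty => simp
      | cons a s ih =>
        rw [Multiset.card_cons, succ_nsmul, Multiset.sum_cons, add_comm a]
        exact Finset.add_mem_add (ih (fun x hx => h1 x (Multiset.mem_cons_of_mem hx)))
          (by simpa using h1 a (Multiset.mem_cons_self _ _))
    rw [he, Set.encard_empty, pos_iff_ne_zero]
    intro h0
    exact hun (Finset.mem_union_right _ (hZ _ h0))

/-- The constant in the growth bound. -/
def CC (m z : ℕ) : ℕ :=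
  (2 ^ (m + 1) + z) + (m + 1) * (4 * 2 ^ m * (2 ^ (m + 1) + z + 5) + 1)

lemma bound_c (m z T n φ c : ℕ) (hT : 1 ≤ T) (hn : n + 2 = 2 * T) (hφ : φ ≤ T)
    (hc : c ≤ (2 * (n + 2) ^ m + 2) * ((n + 2) ^ (m + 1) + (z + φ + n) + 2) + 1) :
    c ≤ (4 * 2 ^ m * (2 ^ (m + 1) + z + 5) + 1) * T ^ (2 * m + 1) := by
  refine hc.trans ?_
  rw [hn]
  have h1 : 2 * (2 * T) ^ m + 2 ≤ 4 * 2 ^ m * T ^ m := by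
    rw [mul_pow]
    have : 1 ≤ 2 ^ m * T ^ m := Nat.succ_le_of_lt (by positivity)
    nlinarith
  have h2 : (2 * T) ^ (m + 1) + (z + φ + n) + 2 ≤ (2 ^ (m + 1) + z + 5) * T ^ (m + 1) := by
    rw [mul_pow]
    have h3 : T ≤ T ^ (m + 1) := Nat.le_self_pow (by omega) T
    have h4 : z ≤ z * T ^ (m + 1) := Nat.le_mul_of_pos_right _ (by positivity)
    rw [add_mul, add_mul]
    omega
  have h5 : 1 ≤ T ^ (2 * m + 1) := Nat.one_le_pow _ _ hT
  calc _ ≤ (4 * 2 ^ m * T ^ m) * ((2 ^ (m + 1) + z + 5) * T ^ (m + 1)) + T ^ (2 * m + 1) :=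
        add_le_add (Nat.mul_le_mul h1 h2) h5
    _ = _ := by ring

lemma bound_u (m z T n : ℕ) (hT : 1 ≤ T) (hn : n + 2 = 2 * T) :
    n ^ (m + 1) + z ≤ (2 ^ (m + 1) + z) * T ^ (2 * m + 1) := by
  have h1 : n ^ (m + 1) ≤ 2 ^ (m + 1) * T ^ (m + 1) := by
    rw [← mul_pow]; exact Nat.pow_le_pow_left (by omega) _
  have h2 : T ^ (m + 1) ≤ T ^ (2 * m + 1) := Nat.pow_le_pow_right hT (by omega)
  have h3 : 1 ≤ T ^ (2 * m + 1) := Nat.one_le_pow _ _ hT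
  have h4 : 2 ^ (m + 1) * T ^ (m + 1) ≤ 2 ^ (m + 1) * T ^ (2 * m + 1) := Nat.mul_le_mul_left _ h2
  have h5 : z ≤ z * T ^ (2 * m + 1) := Nat.le_mul_of_pos_right _ h3
  rw [add_mul]; omega

/-- The inductive invariant. -/
structure StageInv (m z : ℕ) (f : ℤ → ℕ∞) (x : ℕ → ℤ) (k : ℕ) (A : Finset ℤ) : Prop where
  card : A.card = 2 * k
  bd : ∀ a ∈ A, |a| ≤ (CC m z * k ^ (2 * m + 1) : ℕ)
  uniq : Uniq (m + 1) (A : Set ℤ)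
  le : ∀ n, (RR (m + 1) (A : Set ℤ) n).encard ≤ f n
  av : ∀ i, x i ∉ A

lemma step (m : ℕ) (hm : 1 ≤ m) (f : ℤ → ℕ∞) (Z : Finset ℤ) (hZ : ∀ n, f n = 0 → n ∈ Z)
    (x : ℕ → ℤ) (hx : ∀ k, (CC m Z.card * k ^ (2 * m + 1) : ℕ) < |x k|) (k : ℕ) (v : ℤ)
    (hv : |v| ≤ k) (A : Finset ℤ) (hA : StageInv m Z.card f x k A) :
    ∃ A' : Finset ℤ, StageInv m Z.card f x (k + 1) A' ∧ A ⊆ A' ∧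
      ((RR (m + 1) (A : Set ℤ) v).encard < f v →
        (RR (m + 1) (A : Set ℤ) v).encard + 1 ≤ (RR (m + 1) (A' : Set ℤ) v).encard) := by
  classical
  have hn : A.card + 2 = 2 * (k + 1) := by rw [hA.card]; ring
  obtain ⟨u, hub, hu, huv⟩ : ∃ u : ℤ, |u| ≤ ((2 ^ (m + 1) + Z.card) * (k + 1) ^ (2 * m + 1) : ℕ) ∧
      (RR (m + 1) (A : Set ℤ) u).encard < f u ∧
      ((RR (m + 1) (A : Set ℤ) v).encard < f v → u = v) := by
    by_cases hvv : (RR (m + 1) (A : Set ℤ) v).encard < f v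
    · refine ⟨v, hv.trans ?_, hvv, fun _ => rfl⟩
      have h3 : k + 1 ≤ (k + 1) ^ (2 * m + 1) := Nat.le_self_pow (by omega) _
      have h4 : (k + 1) ^ (2 * m + 1) ≤ (2 ^ (m + 1) + Z.card) * (k + 1) ^ (2 * m + 1) :=
        Nat.le_mul_of_pos_left _ (by positivity)
      exact_mod_cast (by omega)
    · obtain ⟨u, h1, h2⟩ := exists_u (m + 1) f A Z hZ
      refine ⟨u, h1.trans ?_, h2, fun h => absurd h hvv⟩
      exact_mod_cast bound_u m Z.card (k + 1) A.card (by omega) hn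
  set F : Finset ℤ := (Finset.range (k + 1)).image x with hF
  have hFc : F.card ≤ k + 1 := Finset.card_image_le.trans (by simp)
  obtain ⟨c, hc1, hc2, hc⟩ := exists_good m hm A Z F u
  have hcb := bound_c m Z.card (k + 1) A.card F.card c (by omega) hn hFc hc2
  obtain ⟨hG, hGZ, h1A, h2A, h12, h1F, h2F⟩ := hc (m * c + u) (-c) rfl rfl
  obtain ⟨r1, r2, r3⟩ := step_core m hm f A u c (m * c + u) (-c) rfl rfl hA.uniq hA.le hu
    (by exact_mod_cast hG) (fun p q s hs h1 h2 h0 => hGZ p q s (by exact_mod_cast hs) h1 h2 (hZ _ h0))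
    (by exact_mod_cast h1A)
  have hcast : ((A ∪ {(m * c + u : ℤ), -(c : ℤ)} : Finset ℤ) : Set ℤ) =
      (A : Set ℤ) ∪ {(m * c + u : ℤ), -(c : ℤ)} := by push_cast; rfl
  have hbd : ∀ a ∈ A ∪ {(m * c + u : ℤ), -(c : ℤ)},
      |a| ≤ (CC m Z.card * (k + 1) ^ (2 * m + 1) : ℕ) := by
    have hcz : (c : ℤ) ≤ ((4 * 2 ^ m * (2 ^ (m + 1) + Z.card + 5) + 1) * (k + 1) ^ (2 * m + 1) : ℕ) := by
      exact_mod_cast hcb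
    have hCC : (CC m Z.card * (k + 1) ^ (2 * m + 1) : ℕ) =
      (2 ^ (m + 1) + Z.card) * (k + 1) ^ (2 * m + 1) +
        (m + 1) * ((4 * 2 ^ m * (2 ^ (m + 1) + Z.card + 5) + 1) * (k + 1) ^ (2 * m + 1)) := by
      unfold CC; ring
    have hm0 : (0 : ℤ) ≤ m := by positivity
    have hu0 := abs_nonneg u
    have hc0 : (0 : ℤ) ≤ c := by positivity
    intro a ha
    simp only [Finset.mem_union, Finset.mem_insert, Finset.mem_singleton] at ha
    rcases ha with ha | rfl | rfl
    · refine (hA.bd a ha).trans ?_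
      exact_mod_cast Nat.mul_le_mul_left _ (Nat.pow_le_pow_left (by omega) _)
    · rw [hCC, Nat.cast_add, Nat.cast_mul (m + 1)]
      refine (abs_add_le _ _).trans ?_
      rw [abs_of_nonneg (by positivity)]
      push_cast at *
      nlinarith
    · rw [hCC, Nat.cast_add, Nat.cast_mul (m + 1)]
      rw [abs_neg, abs_of_nonneg (by positivity)]
      push_cast at *
      nlinarith
  refine ⟨A ∪ {(m * c + u : ℤ), -(c : ℤ)}, ⟨?_, hbd, ?_, ?_, ?_⟩, Finset.subset_union_left, ?_⟩
  · rw [Finset.card_union_of_disjoint, hA.card, Finset.card_pair h12]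
    · ring
    · rw [Finset.disjoint_right]
      intro a ha
      simp only [Finset.mem_insert, Finset.mem_singleton] at ha
      rcases ha with rfl | rfl <;> assumption
  · rw [hcast]; exact r1
  · rw [hcast]; exact r2
  · intro i hi
    rcases Nat.lt_or_ge i (k + 1) with hik | hik
    · have hxF : x i ∈ F := Finset.mem_image_of_mem _ (Finset.mem_range.2 hik)
      simp only [Finset.mem_union, Finset.mem_insert, Finset.mem_singleton] at hi
      rcases hi with hi | hi | hi
      · exact hA.av i hi
      · exact h1F (hi ▸ hxF)
      · exact h2F (hi ▸ hxF)
    · have h1 := hbd _ hi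
      have h2 := hx i
      have h3 : (CC m Z.card * (k + 1) ^ (2 * m + 1) : ℕ) ≤ CC m Z.card * i ^ (2 * m + 1) :=
        Nat.mul_le_mul_left _ (Nat.pow_le_pow_left hik _)
      have h4 : ((CC m Z.card * (k + 1) ^ (2 * m + 1) : ℕ) : ℤ) ≤
        (CC m Z.card * i ^ (2 * m + 1) : ℕ) := by exact_mod_cast h3
      omega
  · intro h
    obtain rfl := huv h
    rw [hcast]; exact r3

/-- A sequence of integers with `|v k| ≤ k` hitting every integer infinitely often. -/
def vseq (k : ℕ) : ℤ := ((k.unpair.1).unpair.1 : ℤ) - ((k.unpair.1).unpair.2 : ℤ)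

lemma vseq_le (k : ℕ) : |vseq k| ≤ k := by
  have h1 := Nat.unpair_left_le k
  have h2 := Nat.unpair_left_le k.unpair.1
  have h3 := Nat.unpair_right_le k.unpair.1
  unfold vseq
  rw [abs_le]
  omega

lemma vseq_hit (n : ℤ) (N : ℕ) : ∃ k, N ≤ k ∧ vseq k = n := by
  refine ⟨Nat.pair (Nat.pair n.toNat (-n).toNat) N, Nat.right_le_pair _ _, ?_⟩
  simp only [vseq, Nat.unpair_pair]
  omega

lemma main_exists (m : ℕ) (hm : 1 ≤ m) (f : ℤ → ℕ∞) (Z : Finset ℤ) (hZ : ∀ n, f n = 0 → n ∈ Z)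
    (x : ℕ → ℤ) (hx : ∀ k, (CC m Z.card * k ^ (2 * m + 1) : ℕ) < |x k|) :
    ∃ A : Set ℤ, (∀ n, (RR (m + 1) A n).encard = f n) ∧
      (∀ k : ℕ, ∃ T : Finset ℤ, (T : Set ℤ) ⊆ A ∧ T.card = 2 * k ∧
        ∀ a ∈ T, |a| ≤ (CC m Z.card * k ^ (2 * m + 1) : ℕ)) ∧ ∀ i, x i ∉ A := by
  classical
  have h0 : StageInv m Z.card f x 0 ∅ := by
    refine ⟨by simp, by simp, ?_, ?_, by simp⟩
    · intro s t hs ht _ _ _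
      rw [Multiset.eq_zero_of_forall_notMem (s := s) (fun a ha => by simpa using hs a ha),
        Multiset.eq_zero_of_forall_notMem (s := t) (fun a ha => by simpa using ht a ha)]
    · intro n
      have : RR (m + 1) ((∅ : Finset ℤ) : Set ℤ) n = ∅ := by
        rw [Set.eq_empty_iff_forall_notMem]
        rintro s ⟨h1, h2, _⟩
        rw [Multiset.eq_zero_of_forall_notMem (s := s) (fun a ha => by simpa using h1 a ha)] at h2
        simp at h2
      rw [this]; simp
  have hstep := fun k (A : {A : Finset ℤ // StageInv m Z.card f x k A}) =>
    step m hm f Z hZ x hx k (vseq k) (vseq_le k) A.1 A.2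
  choose nx hnx1 hnx2 hnx3 using hstep
  let S : (k : ℕ) → {A : Finset ℤ // StageInv m Z.card f x k A} := fun k =>
    Nat.rec ⟨∅, h0⟩ (fun k A => ⟨nx k A, hnx1 k A⟩) k
  have hS2 : ∀ k, (S k).1 ⊆ (S (k + 1)).1 := fun k => hnx2 k (S k)
  have hS3 : ∀ k, (RR (m + 1) ((S k).1 : Set ℤ) (vseq k)).encard < f (vseq k) →
        (RR (m + 1) ((S k).1 : Set ℤ) (vseq k)).encard + 1 ≤
          (RR (m + 1) ((S (k + 1)).1 : Set ℤ) (vseq k)).encard := fun k => hnx3 k (S k)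
  have hmono : Monotone (fun k => (S k).1) := monotone_nat_of_le_succ hS2
  have hsubA : ∀ k, ((S k).1 : Set ℤ) ⊆ ⋃ k, ((S k).1 : Set ℤ) := fun k =>
    Set.subset_iUnion (fun k => ((S k).1 : Set ℤ)) k
  refine ⟨⋃ k, ((S k).1 : Set ℤ), ?_, ?_, ?_⟩
  · intro n
    have hRm : Monotone (fun k => RR (m + 1) ((S k).1 : Set ℤ) n) := fun i j hij =>
      RR_mono (by exact_mod_cast hmono hij) n
    have hfin : ∀ s : Multiset ℤ, (∀ a ∈ s, a ∈ ⋃ k, ((S k).1 : Set ℤ)) →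
        ∃ k, ∀ a ∈ s, a ∈ ((S k).1 : Set ℤ) := by
      intro s
      induction s using Multiset.induction_on with
      | empty => intro _; exact ⟨0, by simp⟩
      | cons a s ih =>
        intro hs
        obtain ⟨k, hk⟩ := ih (fun y hy => hs y (Multiset.mem_cons_of_mem hy))
        obtain ⟨l, hl⟩ := Set.mem_iUnion.1 (hs a (Multiset.mem_cons_self _ _))
        refine ⟨max k l, fun y hy => ?_⟩
        rcases Multiset.mem_cons.1 hy with rfl | hy
        · exact hmono (le_max_right k l) hl
        · exact hmono (le_max_left k l) (hk y hy)
    have hU : RR (m + 1) (⋃ k, ((S k).1 : Set ℤ)) n = ⋃ k, RR (m + 1) ((S k).1 : Set ℤ) n := by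
      ext s
      constructor
      · rintro ⟨h1, h2, h3⟩
        obtain ⟨k, hk⟩ := hfin s h1
        exact Set.mem_iUnion.2 ⟨k, hk, h2, h3⟩
      · intro hs
        obtain ⟨k, hk⟩ := Set.mem_iUnion.1 hs
        exact RR_mono (hsubA k) n hk
    apply le_antisymm
    · by_contra hlt
      rw [not_le] at hlt
      obtain ⟨t, hts, htc⟩ := Set.exists_subset_encard_eq (Order.add_one_le_of_lt hlt)
      have hne : f n ≠ ⊤ := ne_top_of_lt hlt
      have htf : t.Finite := by
        rw [← Set.encard_lt_top_iff, htc]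
        exact ENat.add_lt_top.2 ⟨lt_top_iff_ne_top.2 hne, ENat.one_lt_top⟩
      rw [hU] at hts
      have : ∃ k, t ⊆ RR (m + 1) ((S k).1 : Set ℤ) n := by
        have hd : Directed (· ⊆ ·) (fun k => RR (m + 1) ((S k).1 : Set ℤ) n) := hRm.directed_le
        obtain ⟨k, hk⟩ := hd.exists_mem_subset_of_finset_subset_biUnion (s := htf.toFinset)
          (by simpa using hts)
        exact ⟨k, by simpa using hk⟩
      obtain ⟨k, hk⟩ := this
      have h1 := (Set.encard_le_encard hk).trans ((S k).2.le n)
      rw [htc] at h1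
      exact absurd h1 (not_le.2 ((ENat.lt_add_one_iff hne).2 le_rfl))
    · by_contra hlt
      rw [not_le] at hlt
      have hk : ∀ k, (RR (m + 1) ((S k).1 : Set ℤ) n).encard < f n := fun k =>
        (Set.encard_le_encard (RR_mono (hsubA k) n)).trans_lt hlt
      have hall : ∀ j : ℕ, ∃ k, (j : ℕ∞) ≤ (RR (m + 1) ((S k).1 : Set ℤ) n).encard := by
        intro j
        induction j with
        | zero => exact ⟨0, by simp⟩
        | succ j ih =>
          obtain ⟨k, hkj⟩ := ih
          obtain ⟨l, hl, hln⟩ := vseq_hit n k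
          refine ⟨l + 1, ?_⟩
          have h3 := hS3 l
          rw [hln] at h3
          refine le_trans ?_ (h3 (hk l))
          push_cast
          exact add_le_add_left (hkj.trans (Set.encard_le_encard (hRm hl))) 1
      have htop : (RR (m + 1) (⋃ k, ((S k).1 : Set ℤ)) n).encard = ⊤ := by
        rw [ENat.eq_top_iff_forall_ge]
        intro j
        obtain ⟨k, hkj⟩ := hall j
        exact hkj.trans (Set.encard_le_encard (RR_mono (hsubA k) n))
      rw [htop] at hlt
      exact absurd hlt not_top_lt
  · intro k
    exact ⟨(S k).1, hsubA k, (S k).2.card, (S k).2.bd⟩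
  · intro i hi
    obtain ⟨k, hk⟩ := Set.mem_iUnion.1 hi
    exact (S k).2.av i hk

lemma growth (m C : ℕ) (hC : 1 ≤ C) (A : Set ℤ)
    (hA : ∀ k : ℕ, ∃ T : Finset ℤ, (T : Set ℤ) ⊆ A ∧ T.card = 2 * k ∧
        ∀ a ∈ T, |a| ≤ (C * k ^ (2 * m + 1) : ℕ)) :
    ∃ c₀ x₀ : ℝ, 0 < c₀ ∧ ∀ x : ℝ, x₀ ≤ x →
        c₀ * x ^ ((1 : ℝ) / (2 * ((m + 1 : ℕ) : ℝ) - 1)) ≤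
          ({a : ℤ | a ∈ A ∧ |(a : ℝ)| ≤ x}.ncard : ℝ) := by
  have hCr : (1 : ℝ) ≤ C := by exact_mod_cast hC
  have hCp : (0 : ℝ) < C := by linarith
  set e : ℝ := (1 : ℝ) / (2 * ((m + 1 : ℕ) : ℝ) - 1) with he
  have hd : (2 * ((m + 1 : ℕ) : ℝ) - 1) = ((2 * m + 1 : ℕ) : ℝ) := by push_cast; ring
  have hep : 0 < e := by rw [he, hd]; positivity
  refine ⟨(1 / (C : ℝ)) ^ e, C, by positivity, fun x hx => ?_⟩
  have hx0 : 0 < x := by linarith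
  rw [← Real.mul_rpow (by positivity) hx0.le]
  set y : ℝ := (1 / (C : ℝ) * x) ^ e with hy
  have hb1 : 1 ≤ 1 / (C : ℝ) * x := by rw [one_div, ← div_eq_inv_mul, one_le_div hCp]; exact hx
  have hy1 : 1 ≤ y := Real.one_le_rpow hb1 hep.le
  have hyd : y ^ (2 * m + 1) = 1 / (C : ℝ) * x := by
    rw [hy, he, hd, one_div (((2 * m + 1 : ℕ) : ℝ))]
    exact Real.rpow_inv_natCast_pow (by positivity) (by omega)
  obtain ⟨T, hTA, hTc, hTb⟩ := hA ⌊y⌋₊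
  have hfl : (⌊y⌋₊ : ℝ) ≤ y := Nat.floor_le (by linarith)
  have hfl2 : y < ⌊y⌋₊ + 1 := Nat.lt_floor_add_one y
  have hfl1 : (1 : ℝ) ≤ ⌊y⌋₊ := by exact_mod_cast (Nat.one_le_floor_iff y).2 hy1
  have hsub : (T : Set ℤ) ⊆ {a : ℤ | a ∈ A ∧ |(a : ℝ)| ≤ x} := by
    intro a ha
    refine ⟨hTA ha, ?_⟩
    have h1 : (|(a : ℝ)|) ≤ ((C * ⌊y⌋₊ ^ (2 * m + 1) : ℕ) : ℝ) := by
      have := hTb a ha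
      exact_mod_cast this
    refine h1.trans ?_
    push_cast
    have h2 : (⌊y⌋₊ : ℝ) ^ (2 * m + 1) ≤ y ^ (2 * m + 1) := pow_le_pow_left₀ (by positivity) hfl _
    rw [hyd] at h2
    calc (C : ℝ) * (⌊y⌋₊ : ℝ) ^ (2 * m + 1) ≤ C * (1 / (C : ℝ) * x) := by gcongr
      _ = x := by field_simp
  have hfin : {a : ℤ | a ∈ A ∧ |(a : ℝ)| ≤ x}.Finite := by
    apply (Set.finite_Icc (-⌈x⌉) ⌈x⌉).subset
    rintro a ⟨-, ha⟩
    rw [abs_le] at ha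
    have := Int.le_ceil x
    constructor
    · have : (-⌈x⌉ : ℝ) ≤ a := by linarith
      exact_mod_cast this
    · have : (a : ℝ) ≤ ⌈x⌉ := by linarith
      exact_mod_cast this
  have h3 := Set.ncard_le_ncard hsub hfin
  rw [Set.ncard_coe_finset, hTc] at h3
  have h4 : (2 * ⌊y⌋₊ : ℝ) ≤ ({a : ℤ | a ∈ A ∧ |(a : ℝ)| ≤ x}.ncard : ℝ) := by exact_mod_cast h3
  linarith

theorem stmt5 (h : ℕ) (hh : 2 ≤ h) (f : ℤ → ℕ∞) (hf : (f ⁻¹' {0}).Finite) :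
    ¬ Set.Countable {A : Set ℤ |
      (∀ n : ℤ, repH h A n = f n) ∧
      ∃ c₀ x₀ : ℝ, 0 < c₀ ∧ ∀ x : ℝ, x₀ ≤ x →
        c₀ * x ^ ((1 : ℝ) / (2 * (h : ℝ) - 1)) ≤
          ({a : ℤ | a ∈ A ∧ |(a : ℝ)| ≤ x}.ncard : ℝ)} := by
  obtain ⟨m, rfl⟩ : ∃ m, h = m + 1 := ⟨h - 1, by omega⟩
  have hm : 1 ≤ m := by omega
  set Z : Finset ℤ := hf.toFinset with hZd
  have hZ : ∀ n, f n = 0 → n ∈ Z := by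
    intro n hn
    simp [hZd, hn]
  have hC : 1 ≤ CC m Z.card := by
    unfold CC
    have : 0 < 2 ^ (m + 1) := by positivity
    omega
  intro hcount
  set Q : Set (Set ℤ) := {A : Set ℤ |
      (∀ n : ℤ, repH (m + 1) A n = f n) ∧
      ∃ c₀ x₀ : ℝ, 0 < c₀ ∧ ∀ x : ℝ, x₀ ≤ x →
        c₀ * x ^ ((1 : ℝ) / (2 * ((m + 1 : ℕ) : ℝ) - 1)) ≤
          ({a : ℤ | a ∈ A ∧ |(a : ℝ)| ≤ x}.ncard : ℝ)} with hQ
  have key : ∀ x : ℕ → ℤ, (∀ k, (CC m Z.card * k ^ (2 * m + 1) : ℕ) < |x k|) →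
      ∃ A ∈ Q, ∀ i, x i ∉ A := by
    intro x hx
    obtain ⟨A, h1, h2, h3⟩ := main_exists m hm f Z hZ x hx
    exact ⟨A, ⟨fun n => (repH_eq _ _ _).trans (h1 n), growth m _ hC A h2⟩, h3⟩
  have hinf : ∀ A ∈ Q, A.Infinite := by
    rintro A ⟨-, c₀, x₀, hc, hx⟩ hfin
    have hep : 0 < (1 : ℝ) / (2 * ((m + 1 : ℕ) : ℝ) - 1) := by
      have : (2 * ((m + 1 : ℕ) : ℝ) - 1) = ((2 * m + 1 : ℕ) : ℝ) := by push_cast; ring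
      rw [this]; positivity
    have ht := (tendsto_rpow_atTop hep).const_mul_atTop hc
    obtain ⟨x, hx1, hx2⟩ := ((ht.eventually_gt_atTop (A.ncard : ℝ)).and
      (Filter.eventually_ge_atTop x₀)).exists
    have h1 := hx x hx2
    have h2 : ({a : ℤ | a ∈ A ∧ |(a : ℝ)| ≤ x}.ncard : ℝ) ≤ A.ncard := by
      have hs : {a : ℤ | a ∈ A ∧ |(a : ℝ)| ≤ x} ⊆ A := fun a ha => ha.1
      exact_mod_cast Set.ncard_le_ncard hs hfin
    linarith
  have hpick : ∀ A : Set ℤ, A.Infinite → ∀ N : ℕ, ∃ a ∈ A, (N : ℤ) < |a| := by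
    intro A hA N
    by_contra hcon
    push Not at hcon
    apply hA
    apply (Set.finite_Icc (-(N : ℤ)) N).subset
    intro a ha
    exact abs_le.1 (hcon a ha)
  rcases Q.eq_empty_or_nonempty with hE | hE
  · obtain ⟨A, hA, -⟩ := key (fun k => (CC m Z.card * k ^ (2 * m + 1) : ℕ) + 1) (fun k => by
      rw [abs_of_nonneg (by positivity)]; omega)
    rw [hE] at hA
    exact hA
  · obtain ⟨g, hg⟩ := hcount.exists_eq_range hE
    have hgQ : ∀ k, g k ∈ Q := fun k => hg ▸ Set.mem_range_self k
    choose x hx1 hx2 using fun k => hpick (g k) (hinf _ (hgQ k)) (CC m Z.card * k ^ (2 * m + 1))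
    obtain ⟨A, hA, hAx⟩ := key x hx2
    rw [hg] at hA
    obtain ⟨k, rfl⟩ := hA
    exact hAx k (hx1 k)
end

section
/- There exists a set A of integers such that r_{A,2}(n) = 1 for every integer n (a unique representation basis for ℤ), and such that the number of elements a ∈ A with |a| ≤ x is at least (x/8)^{1/3} for all real x ≥ 64. -/
/-- The representation function of order 2: the number (in `ℕ∞`) of ways to
write `n = a₁ + a₂` with `a₁, a₂ ∈ A` and `a₁ ≤ a₂`. -/
noncomputable def rep2 (A : Set ℤ) (n : ℤ) : ℕ∞ :=
  {p : ℤ × ℤ | p.1 ∈ A ∧ p.2 ∈ A ∧ p.1 ≤ p.2 ∧ p.1 + p.2 = n}.encard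

/-- Finite Sidon sets of integers. -/
def SidonF (A : Finset ℤ) : Prop :=
  ∀ a ∈ A, ∀ b ∈ A, ∀ c ∈ A, ∀ d ∈ A, a + b = c + d → (a = c ∧ b = d) ∨ (a = d ∧ b = c)

theorem SidonF.insert_new {A : Finset ℤ} (hA : SidonF A) (b : ℤ)
    (h1 : ∀ x ∈ A, ∀ y ∈ A, ∀ z ∈ A, b ≠ x + y - z)
    (h2 : ∀ x ∈ A, ∀ y ∈ A, 2 * b ≠ x + y) : SidonF (insert b A) := by
  intro p hp q hq r hr s hs h
  rw [Finset.mem_insert] at hp hq hr hs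
  rcases hp with rfl | hp <;> rcases hq with rfl | hq <;> rcases hr with rfl | hr <;>
    rcases hs with rfl | hs
  all_goals first
    | omega
    | exact hA _ hp _ hq _ hr _ hs h
    | (exfalso; exact h2 _ hr _ hs (by omega))
    | (exfalso; exact h2 _ hp _ hq (by omega))
    | (exfalso; exact h1 _ hr _ hs _ hq (by omega))
    | (exfalso; exact h1 _ hr _ hs _ hp (by omega))
    | (exfalso; exact h1 _ hp _ hq _ hs (by omega))
    | (exfalso; exact h1 _ hp _ hq _ hr (by omega))

/-- The values that the new element must avoid. -/
def badL (n : ℤ) (t : ℤ × ℤ × ℤ) : List ℤ :=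
  [t.1 + t.2.1 - t.2.2, n - (t.1 + t.2.1 - t.2.2), (t.1 + t.2.1) / 2, n - (t.1 + t.2.1) / 2,
    (n + t.1 - t.2.1) / 2, (n + t.1) / 3, (2 * n - t.1) / 3, n / 2]

theorem step_unrep (A : Finset ℤ) (hA : SidonF A) (hk : 1 ≤ A.card) (n : ℤ)
    (hn : |n| ≤ (A.card : ℤ) ^ 2) (hrep : ∀ x ∈ A, ∀ y ∈ A, x + y ≠ n) :
    ∃ A' : Finset ℤ, A ⊆ A' ∧ SidonF A' ∧ A'.card = A.card + 2 ∧
      (∃ x ∈ A', ∃ y ∈ A', x + y = n) ∧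
      ∀ a ∈ A', a ∈ A ∨ |a| ≤ 8 * (A.card : ℤ) ^ 3 := by
  classical
  set k := A.card with hkdef
  set F : Finset ℤ := (A ×ˢ A ×ˢ A).biUnion (fun t => (badL n t).toFinset) with hF
  have hFc : F.card ≤ 8 * k ^ 3 := by
    have := Finset.card_biUnion_le_card_mul (A ×ˢ A ×ˢ A) (fun t => (badL n t).toFinset) 8
      (fun t _ => (List.toFinset_card_le _).trans (by simp [badL]))
    rw [Finset.card_product, Finset.card_product] at this
    calc F.card ≤ _ := this
      _ = 8 * k ^ 3 := by rw [← hkdef]; ring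
  obtain ⟨a0, ha0⟩ : A.Nonempty := Finset.card_pos.mp hk
  have hkz : (1 : ℤ) ≤ k := by exact_mod_cast hk
  have hk23 : (k : ℤ) ^ 2 ≤ (k : ℤ) ^ 3 := by nlinarith [sq_nonneg (k : ℤ)]
  have hk2 : (1 : ℤ) ≤ (k : ℤ) ^ 2 := by nlinarith
  obtain ⟨b, hbR, hbF⟩ : ∃ b ∈ Finset.Icc (-(8 * (k : ℤ) ^ 3 - k ^ 2)) (8 * (k : ℤ) ^ 3 - k ^ 2),
      b ∉ F := by
    apply Finset.exists_mem_notMem_of_card_lt_card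
    rw [Int.card_Icc]
    have : (F.card : ℤ) ≤ 8 * (k : ℤ) ^ 3 := by exact_mod_cast hFc
    omega
  rw [Finset.mem_Icc] at hbR
  have key : ∀ x ∈ A, ∀ y ∈ A, ∀ z ∈ A, b ∉ badL n (x, y, z) := by
    intro x hx y hy z hz hb
    apply hbF
    rw [hF, Finset.mem_biUnion]
    exact ⟨(x, y, z), by simp [hx, hy, hz], by simpa using hb⟩
  simp only [badL, List.mem_cons, List.not_mem_nil, or_false, not_or] at key
  have hS1 : SidonF (insert b A) := by
    apply hA.insert_new
    · intro x hx y hy z hz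
      have := key x hx y hy z hz
      omega
    · intro x hx y hy
      have := key x hx y hy y hy
      omega
  have hS2 : SidonF (insert (n - b) (insert b A)) := by
    apply hS1.insert_new
    · intro x hx y hy z hz h
      rw [Finset.mem_insert] at hx hy hz
      rcases hx with rfl | hx <;> rcases hy with rfl | hy <;> rcases hz with rfl | hz
      · have := key a0 ha0 a0 ha0 a0 ha0
        omega
      · have := key z hz z hz z hz
        omega
      · have := key y hy y hy y hy
        omega
      · have := key z hz y hy y hy
        omega
      · have := key x hx x hx x hx
        omega
      · have := key z hz x hx x hx
        omega
      · exact hrep x hx y hy (by omega)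
      · have := key x hx y hy z hz
        omega
    · intro x hx y hy h
      rw [Finset.mem_insert] at hx hy
      rcases hx with rfl | hx <;> rcases hy with rfl | hy
      · have := key a0 ha0 a0 ha0 a0 ha0
        omega
      · have := key y hy y hy y hy
        omega
      · have := key x hx x hx x hx
        omega
      · have := key x hx y hy y hy
        omega
  have hbA : b ∉ A := fun h => by
    have := key b h b h b h
    omega
  have hnbA : n - b ∉ insert b A := fun h => by
    rw [Finset.mem_insert] at h
    rcases h with h | h
    · have := key a0 ha0 a0 ha0 a0 ha0
      omega
    · have := key _ h _ h _ h
      omega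
  refine ⟨insert (n - b) (insert b A), ?_, hS2, ?_, ⟨n - b, by simp, b, by simp, by ring⟩, ?_⟩
  · intro x hx
    simp [hx]
  · rw [Finset.card_insert_of_notMem hnbA, Finset.card_insert_of_notMem hbA]
  · intro a ha
    rw [abs_le] at hn
    rw [Finset.mem_insert, Finset.mem_insert] at ha
    rcases ha with rfl | rfl | ha
    · right
      rw [abs_le]
      constructor <;> omega
    · right
      rw [abs_le]
      constructor <;> omega
    · exact Or.inl ha

theorem step_any (A : Finset ℤ) (hA : SidonF A) (hk : 1 ≤ A.card) (n : ℤ)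
    (hn : |n| ≤ (A.card : ℤ) ^ 2) :
    ∃ A' : Finset ℤ, A ⊆ A' ∧ SidonF A' ∧ A'.card = A.card + 2 ∧
      (∃ x ∈ A', ∃ y ∈ A', x + y = n) ∧
      ∀ a ∈ A', a ∈ A ∨ |a| ≤ 8 * (A.card : ℤ) ^ 3 := by
  classical
  by_cases h : ∃ x ∈ A, ∃ y ∈ A, x + y = n
  · obtain ⟨m, hm, hmF⟩ : ∃ m ∈ Finset.Icc (0 : ℤ) ((A.card : ℤ) ^ 2),
        m ∉ (A ×ˢ A).image (fun p => p.1 + p.2) := by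
      apply Finset.exists_mem_notMem_of_card_lt_card
      have h1 : ((A ×ˢ A).image (fun p : ℤ × ℤ => p.1 + p.2)).card ≤ A.card ^ 2 := by
        refine Finset.card_image_le.trans ?_
        rw [Finset.card_product, sq]
      rw [Int.card_Icc]
      have h2 : (((A ×ˢ A).image (fun p : ℤ × ℤ => p.1 + p.2)).card : ℤ) ≤ (A.card : ℤ) ^ 2 := by
        exact_mod_cast h1
      omega
    rw [Finset.mem_Icc] at hm
    obtain ⟨A', h1, h2, h3, _, h5⟩ := step_unrep A hA hk m
      (by rw [abs_of_nonneg hm.1]; exact hm.2)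
      (fun x hx y hy hxy => hmF (Finset.mem_image.mpr ⟨(x, y), by simp [hx, hy], hxy⟩))
    obtain ⟨x, hx, y, hy, hxy⟩ := h
    exact ⟨A', h1, h2, h3, ⟨x, h1 hx, y, h1 hy, hxy⟩, h5⟩
  · push Not at h
    exact step_unrep A hA hk n hn h

/-- Enumeration of the integers. -/
def enumZ (i : ℕ) : ℤ := if i % 2 = 0 then (i / 2 : ℕ) else -((i / 2 : ℕ) : ℤ) - 1

theorem enumZ_abs (i : ℕ) : |enumZ i| ≤ i + 1 := by
  unfold enumZ
  rw [abs_le]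
  split_ifs <;> constructor <;> omega

theorem enumZ_surj (n : ℤ) : ∃ i, enumZ i = n := by
  rcases le_or_gt 0 n with h | h
  · refine ⟨2 * n.toNat, ?_⟩
    unfold enumZ
    rw [if_pos (by omega)]
    omega
  · refine ⟨2 * (-n - 1).toNat + 1, ?_⟩
    unfold enumZ
    rw [if_neg (by omega)]
    omega

/-- Invariant of the construction. -/
def ConsInv (i : ℕ) (A : Finset ℤ) : Prop :=
  SidonF A ∧ A.card = 2 * i + 2 ∧ ∀ a ∈ A, |a| ≤ max 1 (64 * (i : ℤ) ^ 3)

theorem inv_step (i : ℕ) (A : Finset ℤ) (h : ConsInv i A) :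
    ∃ A' : Finset ℤ, ConsInv (i + 1) A' ∧ A ⊆ A' ∧ ∃ x ∈ A', ∃ y ∈ A', x + y = enumZ i := by
  obtain ⟨hS, hc, hb⟩ := h
  have hn : |enumZ i| ≤ (A.card : ℤ) ^ 2 := by
    refine (enumZ_abs i).trans ?_
    rw [hc]
    push_cast
    nlinarith
  obtain ⟨A', h1, h2, h3, h4, h5⟩ := step_any A hS (by omega) (enumZ i) hn
  refine ⟨A', ⟨h2, by omega, ?_⟩, h1, h4⟩
  intro a ha
  rcases h5 a ha with h | h
  · refine (hb a h).trans (max_le_max le_rfl ?_)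
    push_cast
    gcongr
    omega
  · refine le_max_of_le_right (h.trans (le_of_eq ?_))
    rw [hc]
    push_cast
    ring

theorem consInv_zero : ConsInv 0 {0, 1} := by
  refine ⟨?_, by simp, ?_⟩
  · intro a ha b hb c hc d hd h
    simp only [Finset.mem_insert, Finset.mem_singleton] at ha hb hc hd
    omega
  · intro a ha
    simp only [Finset.mem_insert, Finset.mem_singleton] at ha
    rcases ha with rfl | rfl <;> simp

/-- The increasing sequence of finite Sidon sets. -/
noncomputable def seqA : (i : ℕ) → {A : Finset ℤ // ConsInv i A}
  | 0 => ⟨{0, 1}, consInv_zero⟩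
  | i + 1 => ⟨(inv_step i (seqA i).1 (seqA i).2).choose,
      (inv_step i (seqA i).1 (seqA i).2).choose_spec.1⟩

theorem seqA_sub (i : ℕ) : (seqA i).1 ⊆ (seqA (i + 1)).1 :=
  (inv_step i (seqA i).1 (seqA i).2).choose_spec.2.1

theorem seqA_rep (i : ℕ) : ∃ x ∈ (seqA (i + 1)).1, ∃ y ∈ (seqA (i + 1)).1, x + y = enumZ i :=
  (inv_step i (seqA i).1 (seqA i).2).choose_spec.2.2

theorem seqA_mono : Monotone (fun i => (seqA i).1) := monotone_nat_of_le_succ seqA_sub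

theorem stmt7 :
    ∃ A : Set ℤ,
      (∀ n : ℤ, rep2 A n = 1) ∧
      ∀ x : ℝ, 64 ≤ x →
        (x / 8) ^ ((1 : ℝ) / 3) ≤ ({a : ℤ | a ∈ A ∧ |(a : ℝ)| ≤ x}.ncard : ℝ) := by
  refine ⟨{a | ∃ i, a ∈ (seqA i).1}, ?_, ?_⟩
  · intro n
    obtain ⟨i, rfl⟩ := enumZ_surj n
    obtain ⟨x, hx, y, hy, hxy⟩ := seqA_rep i
    wlog hle : x ≤ y generalizing x y
    · exact this y hy x hx (by omega) (by omega)
    unfold rep2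
    rw [Set.encard_eq_one]
    refine ⟨(x, y), ?_⟩
    ext ⟨p, q⟩
    simp only [Set.mem_setOf_eq, Set.mem_singleton_iff, Prod.mk.injEq]
    constructor
    · rintro ⟨⟨j, hj⟩, ⟨l, hl⟩, hpq, hs⟩
      let N := max (i + 1) (max j l)
      have hN1 : i + 1 ≤ N := le_max_left _ _
      have hN2 : j ≤ N := (le_max_left _ _).trans (le_max_right _ _)
      have hN3 : l ≤ N := (le_max_right _ _).trans (le_max_right _ _)
      have := (seqA N).2.1 p (seqA_mono hN2 hj) q (seqA_mono hN3 hl) x (seqA_mono hN1 hx)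
        y (seqA_mono hN1 hy) (by omega)
      omega
    · rintro ⟨rfl, rfl⟩
      exact ⟨⟨_, hx⟩, ⟨_, hy⟩, hle, hxy⟩
  · intro x hx
    set t := (x / 8) ^ ((1 : ℝ) / 3) with ht
    have hx0 : 0 ≤ x / 8 := by linarith
    have ht0 : 0 ≤ t := Real.rpow_nonneg hx0 _
    have ht3 : t ^ 3 = x / 8 := by
      rw [ht, ← Real.rpow_natCast, ← Real.rpow_mul hx0]
      norm_num
    have ht2 : 2 ≤ t := by
      by_contra hlt
      push Not at hlt
      have : t ^ 3 < 2 ^ 3 := pow_lt_pow_left₀ hlt ht0 (by norm_num)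
      linarith
    set i := ⌊t / 2⌋₊ with hi
    have hi1 : 1 ≤ i := Nat.le_floor (by push_cast; linarith)
    have hi2 : (i : ℝ) ≤ t / 2 := Nat.floor_le (by linarith)
    have hi3 : t / 2 < i + 1 := Nat.lt_floor_add_one _
    have hsub : ((seqA i).1 : Set ℤ) ⊆
        {a : ℤ | a ∈ {a | ∃ i, a ∈ (seqA i).1} ∧ |(a : ℝ)| ≤ x} := by
      intro a ha
      refine ⟨⟨i, ha⟩, ?_⟩
      have h1 := (seqA i).2.2.2 a ha
      have hi1z : (1 : ℤ) ≤ (i : ℤ) ^ 3 := one_le_pow₀ (by exact_mod_cast hi1)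
      rw [max_eq_right (by omega)] at h1
      have h2 : |(a : ℝ)| ≤ 64 * (i : ℝ) ^ 3 := by exact_mod_cast h1
      have h3 : (i : ℝ) ^ 3 ≤ (t / 2) ^ 3 := pow_le_pow_left₀ (by positivity) hi2 3
      have h4 : (t / 2) ^ 3 = x / 64 := by rw [div_pow, ht3]; ring
      linarith
    have hfin : {a : ℤ | a ∈ {a | ∃ i, a ∈ (seqA i).1} ∧ |(a : ℝ)| ≤ x}.Finite := by
      refine (Set.finite_Icc (-⌊x⌋) ⌊x⌋).subset ?_
      rintro a ⟨_, ha⟩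
      rw [abs_le] at ha
      refine ⟨?_, Int.le_floor.mpr ha.2⟩
      have : -a ≤ ⌊x⌋ := Int.le_floor.mpr (by push_cast; linarith)
      omega
    have hcard := Set.ncard_le_ncard hsub hfin
    rw [Set.ncard_coe_finset, (seqA i).2.2.1] at hcard
    have hcard' : ((2 * i + 2 : ℕ) : ℝ) ≤ _ := Nat.cast_le.mpr hcard
    refine le_trans ?_ hcard'
    push_cast
    linarith
end
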